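/- Power series expansion of the FL¹ solution of gIBq: let k ≥ 2 be an integer. There exists c > 0, depending only on k, such that for every M > 0, every T with 0 < T ≤ 1 and T²·M^{k−1} ≤ c, and all v₀, v₁ ∈ L¹(ℝ) with ‖v₀‖_{L¹(ℝ)} + ‖v₁‖_{L¹(ℝ)} ≤ M, any Fourier-side solution v : [0, T] → L¹(ℝ) of gIBq with nonlinearity u^k and data (v₀, v₁) satisfying sup_{0 ≤ t ≤ T} ‖v(t)‖_{L¹(ℝ)} ≤ 2M is given by the absolutely convergent series v(t) = Σ_{j=0}^{∞} Ξ̂_j(v₀, v₁)(t) in L¹(ℝ), for every t ∈ [0, T], with Σ_{j=0}^{∞} sup_{0 ≤ t ≤ T} ‖Ξ̂_j(v₀,v₁)(t)‖_{L¹(ℝ)} < ∞. -/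

import Mathlib

open MeasureTheory Filter
open scoped ENNReal

noncomputable section

/-- The Japanese bracket weight `⟨ξ⟩^s = (1+ξ²)^(s/2)`. -/
def jbw (s ξ : ℝ) : ℝ := (1 + ξ ^ 2) ^ (s / 2)

/-- `λ(ξ) = |ξ|/⟨ξ⟩`. -/
def lam (ξ : ℝ) : ℝ := |ξ| / (1 + ξ ^ 2) ^ ((1 : ℝ) / 2)

/-- The multiplier `m(t,ξ) = sin(tλ(ξ))/λ(ξ)` for `ξ ≠ 0`, `m(t,0) = t`. -/
def mker (t ξ : ℝ) : ℝ := if ξ = 0 then t else Real.sin (t * lam ξ) / lam ξ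

/-- Fourier side linear propagator `Ŝ(t)(v₀,v₁)`. -/
def Shat (t : ℝ) (v₀ v₁ : ℝ → ℂ) (ξ : ℝ) : ℂ :=
  (Real.cos (t * lam ξ) : ℂ) * v₀ ξ + (mker t ξ : ℂ) * v₁ ξ

/-- Convolution of complex valued functions on `ℝ`. -/
def conv (f g : ℝ → ℂ) (ξ : ℝ) : ℂ := ∫ η, f η * g (ξ - η)

/-- Iterated convolution of a list of functions. -/
def convList : List (ℝ → ℂ) → ℝ → ℂ
  | [] => fun _ => 0
  | [f] => f
  | f :: g :: fs => conv f (convList (g :: fs))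

/-- Fourier side Duhamel operator `Î_k`. -/
def Ihat (k : ℕ) (w : Fin k → ℝ → ℝ → ℂ) (t ξ : ℝ) : ℂ :=
  ∫ t' in (0:ℝ)..t,
    ((Real.sin ((t - t') * lam ξ) * lam ξ : ℝ) : ℂ) * convList (List.ofFn fun i => w i t') ξ

/-- Continuity of a curve of functions with respect to the `L¹` norm, on `[0,T]`. -/
def ContinuousL1On (T : ℝ) (v : ℝ → ℝ → ℂ) : Prop :=
  ∀ t₀ ∈ Set.Icc (0 : ℝ) T,
    Tendsto (fun t => eLpNorm (fun ξ => v t ξ - v t₀ ξ) 1 volume)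
      (nhdsWithin t₀ (Set.Icc (0 : ℝ) T)) (nhds 0)

/-- Fourier-side solution of the generalized improved Boussinesq equation with
nonlinearity `u^k` and data `(v₀, v₁)` on `[0, T]`. -/
def IsGIBqSol (k : ℕ) (T : ℝ) (v₀ v₁ : ℝ → ℂ) (v : ℝ → ℝ → ℂ) : Prop :=
  (∀ t ∈ Set.Icc (0 : ℝ) T, Integrable (v t)) ∧
  ContinuousL1On T v ∧
  ∀ t ∈ Set.Icc (0 : ℝ) T,
    ∀ᵐ ξ ∂volume, v t ξ = Shat t v₀ v₁ ξ + Ihat k (fun _ => v) t ξ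

/-- Picard iterates `Ξ̂_j` for gIBq on the Fourier side. -/
def Xi (k : ℕ) (v₀ v₁ : ℝ → ℂ) : ℕ → ℝ → ℝ → ℂ
  | 0 => fun t => Shat t v₀ v₁
  | (j+1) => fun t ξ =>
      ∑ p ∈ (Finset.Nat.antidiagonalTuple k j).attach,
        Ihat k (fun i => Xi k v₀ v₁ (p.1 i)) t ξ
decreasing_by
  have hsum := Finset.Nat.mem_antidiagonalTuple.mp p.2
  have hle : p.1 i ≤ j := by
    calc p.1 i ≤ ∑ i', p.1 i' :=
          Finset.single_le_sum (fun _ _ => Nat.zero_le _) (Finset.mem_univ i)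
      _ = j := hsum
  omega

/-- The `FL^{s,p}` norm on the Fourier side: `‖⟨ξ⟩^s w‖_{L^p}`. -/
def FLnorm (s : ℝ) (p : ℝ≥0∞) (w : ℝ → ℂ) : ℝ≥0∞ :=
  eLpNorm (fun ξ => jbw s ξ * ‖w ξ‖) p volume

end

/-! ### Convolution on `L¹` -/

lemma conv_integrand {f g : ℝ → ℂ} (hf : Integrable f) (hg : Integrable g) :
    Integrable (fun p : ℝ × ℝ => f p.2 * g (p.1 - p.2)) (volume.prod volume) :=
  hf.convolution_integrand (ContinuousLinearMap.mul ℂ ℂ) hg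

lemma conv_integrable {f g : ℝ → ℂ} (hf : Integrable f) (hg : Integrable g) :
    Integrable (conv f g) :=
  (conv_integrand hf hg).integral_prod_left

lemma conv_ae_exists {f g : ℝ → ℂ} (hf : Integrable f) (hg : Integrable g) :
    ∀ᵐ ξ, Integrable (fun η => f η * g (ξ - η)) :=
  (conv_integrand hf hg).prod_right_ae

lemma conv_congr {f f' g g' : ℝ → ℂ} (hf : f =ᵐ[volume] f') (hg : g =ᵐ[volume] g') :
    conv f g = conv f' g' := by
  funext ξ
  apply integral_congr_ae
  have h2 : ∀ᵐ η : ℝ, g (ξ - η) = g' (ξ - η) :=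
    (Measure.measurePreserving_sub_left volume ξ).quasiMeasurePreserving.ae hg
  filter_upwards [hf, h2] with η h1 h2
  rw [h1, h2]

lemma eLpNorm_conv_le {f g : ℝ → ℂ} (hf : Integrable f) (hg : Integrable g) :
    eLpNorm (conv f g) 1 volume ≤ eLpNorm f 1 volume * eLpNorm g 1 volume := by
  simp only [eLpNorm_one_eq_lintegral_enorm]
  calc ∫⁻ ξ, ‖conv f g ξ‖ₑ ≤ ∫⁻ ξ, ∫⁻ η, ‖f η * g (ξ - η)‖ₑ :=
        lintegral_mono fun ξ => enorm_integral_le_lintegral_enorm _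
    _ = ∫⁻ η, ∫⁻ ξ, ‖f η * g (ξ - η)‖ₑ :=
        lintegral_lintegral_swap (conv_integrand hf hg).aestronglyMeasurable.enorm
    _ = ∫⁻ η, ‖f η‖ₑ * ∫⁻ ξ, ‖g ξ‖ₑ := by
        refine lintegral_congr fun η => ?_
        simp only [enorm_mul]
        rw [lintegral_const_mul' _ _ (by simp)]
        congr 1
        exact lintegral_sub_right_eq_self (fun ξ => ‖g ξ‖ₑ) η
    _ = _ := by
        rw [lintegral_mul_const'' _ hf.aestronglyMeasurable.enorm]

/-- The space `L¹(ℝ)`. -/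
abbrev LOne : Type := ℝ →₁[volume] ℂ

lemma LOne.integrable (f : LOne) : Integrable (f : ℝ → ℂ) := L1.integrable_coeFn f

/-- Convolution as a map on `L¹`. -/
noncomputable def convL (f g : LOne) : LOne := (conv_integrable f.integrable g.integrable).toL1 _

lemma convL_coe (f g : LOne) : (convL f g : ℝ → ℂ) =ᵐ[volume] conv f g :=
  Integrable.coeFn_toL1 _

/-- Convolution as a bilinear map. -/
noncomputable def convLin : LOne →ₗ[ℂ] LOne →ₗ[ℂ] LOne :=
  LinearMap.mk₂ ℂ convL
    (by
      intro f f' g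
      apply Lp.ext
      filter_upwards [convL_coe (f + f') g, convL_coe f g, convL_coe f' g,
        Lp.coeFn_add (convL f g) (convL f' g), conv_ae_exists f.integrable g.integrable,
        conv_ae_exists f'.integrable g.integrable] with ξ h1 h2 h3 h4 h5 h6
      rw [h1, h4, Pi.add_apply, h2, h3, conv_congr (Lp.coeFn_add f f') (ae_eq_refl _)]
      simp only [conv, Pi.add_apply, add_mul]
      exact integral_add h5 h6)
    (by
      intro c f g
      apply Lp.ext
      filter_upwards [convL_coe (c • f) g, convL_coe f g,
        Lp.coeFn_smul c (convL f g)] with ξ h1 h2 h4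
      rw [h1, h4, Pi.smul_apply, h2, conv_congr (Lp.coeFn_smul c f) (ae_eq_refl _)]
      simp only [conv, Pi.smul_apply, smul_eq_mul, mul_assoc]
      exact integral_const_mul _ _)
    (by
      intro f g g'
      apply Lp.ext
      filter_upwards [convL_coe f (g + g'), convL_coe f g, convL_coe f g',
        Lp.coeFn_add (convL f g) (convL f g'), conv_ae_exists f.integrable g.integrable,
        conv_ae_exists f.integrable g'.integrable] with ξ h1 h2 h3 h4 h5 h6
      rw [h1, h4, Pi.add_apply, h2, h3, conv_congr (ae_eq_refl _) (Lp.coeFn_add g g')]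
      simp only [conv, Pi.add_apply, mul_add]
      exact integral_add h5 h6)
    (by
      intro c f g
      apply Lp.ext
      filter_upwards [convL_coe f (c • g), convL_coe f g,
        Lp.coeFn_smul c (convL f g)] with ξ h1 h2 h4
      rw [h1, h4, Pi.smul_apply, h2, conv_congr (ae_eq_refl _) (Lp.coeFn_smul c g)]
      simp only [conv, Pi.smul_apply, smul_eq_mul, mul_left_comm _ c]
      exact integral_const_mul _ _)

lemma convL_norm_le (f g : LOne) : ‖convL f g‖ ≤ ‖f‖ * ‖g‖ := by
  rw [Lp.norm_def, Lp.norm_def, Lp.norm_def, ← ENNReal.toReal_mul]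
  apply ENNReal.toReal_mono (ENNReal.mul_ne_top (Lp.eLpNorm_ne_top f) (Lp.eLpNorm_ne_top g))
  rw [eLpNorm_congr_ae (convL_coe f g)]
  exact eLpNorm_conv_le f.integrable g.integrable

/-- Convolution as a continuous bilinear map. -/
noncomputable def convCLM : LOne →L[ℂ] LOne →L[ℂ] LOne :=
  LinearMap.mkContinuous₂ convLin 1 (fun f g => by
    rw [one_mul]
    exact convL_norm_le f g)

lemma convCLM_apply (f g : LOne) : convCLM f g = convL f g := rfl

/-- Iterated convolution as a continuous multilinear map. -/
noncomputable def convMul : (n : ℕ) → ContinuousMultilinearMap ℂ (fun _ : Fin (n + 1) => LOne) LOne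
  | 0 => ContinuousMultilinearMap.ofSubsingleton ℂ LOne LOne (0 : Fin 1)
      (ContinuousLinearMap.id ℂ LOne)
  | (n + 1) => ContinuousLinearMap.uncurryLeft
      (((ContinuousLinearMap.compContinuousMultilinearMapL ℂ
        (fun _ : Fin (n + 1) => LOne) LOne LOne).flip (convMul n)).comp convCLM)

/-- The class of an integrable function (junk value zero otherwise). -/
noncomputable def toL (f : ℝ → ℂ) : LOne :=
  open Classical in if h : Integrable f then h.toL1 f else 0

lemma toL_coe {f : ℝ → ℂ} (hf : Integrable f) : (toL f : ℝ → ℂ) =ᵐ[volume] f := by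
  rw [toL, dif_pos hf]
  exact Integrable.coeFn_toL1 _

lemma toL_enorm {f : ℝ → ℂ} (hf : Integrable f) : ‖toL f‖ₑ = eLpNorm f 1 volume := by
  rw [Lp.enorm_def, eLpNorm_congr_ae (toL_coe hf)]

lemma convList_ofFn_succ (n : ℕ) (f : Fin (n + 2) → ℝ → ℂ) :
    convList (List.ofFn f) = conv (f 0) (convList (List.ofFn fun i : Fin (n + 1) => f i.succ)) := by
  rw [List.ofFn_succ, List.ofFn_succ, convList]

lemma convMul_coe (n : ℕ) (f : Fin (n + 1) → ℝ → ℂ) (hf : ∀ i, Integrable (f i)) :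
    (convMul n (fun i => toL (f i)) : ℝ → ℂ) =ᵐ[volume] convList (List.ofFn f) := by
  induction n with
  | zero => simpa [convMul, convList] using toL_coe (hf 0)
  | succ n ih =>
    have h1 : convMul (n + 1) (fun i => toL (f i))
        = convL (toL (f 0)) (convMul n (fun i => toL (f i.succ))) := rfl
    rw [h1, convList_ofFn_succ]
    refine (convL_coe _ _).trans ?_
    rw [conv_congr (toL_coe (hf 0)) (ih (fun i => f i.succ) (fun i => hf _))]

lemma convList_integrable (n : ℕ) (f : Fin (n + 1) → ℝ → ℂ) (hf : ∀ i, Integrable (f i)) :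
    Integrable (convList (List.ofFn f)) :=
  (LOne.integrable _).congr (convMul_coe n f hf)

lemma convMul_toL (n : ℕ) (f : Fin (n + 1) → ℝ → ℂ) (hf : ∀ i, Integrable (f i)) :
    convMul n (fun i => toL (f i)) = toL (convList (List.ofFn f)) :=
  Lp.ext ((convMul_coe n f hf).trans (toL_coe (convList_integrable n f hf)).symm)

/-! ### Joint measurability -/

/-- Jointly measurable on `[0,T]`. -/
def HM (T : ℝ) (N : ℝ → ℝ → ℂ) : Prop :=
  ∃ N' : ℝ → ℝ → ℂ, StronglyMeasurable (Function.uncurry N') ∧ ∀ t ∈ Set.Icc (0 : ℝ) T, N t = N' t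

/-- Has a jointly measurable version on `[0,T]`. -/
def HV (T : ℝ) (N : ℝ → ℝ → ℂ) : Prop :=
  ∃ N' : ℝ → ℝ → ℂ, StronglyMeasurable (Function.uncurry N') ∧
    ∀ t ∈ Set.Icc (0 : ℝ) T, N t =ᵐ[volume] N' t

lemma HM.hv {T : ℝ} {N : ℝ → ℝ → ℂ} (h : HM T N) : HV T N := by
  obtain ⟨N', h1, h2⟩ := h
  exact ⟨N', h1, fun t ht => by rw [h2 t ht]⟩

lemma HV.aesm {T : ℝ} {N : ℝ → ℝ → ℂ} (h : HV T N) {t : ℝ} (ht : t ∈ Set.Icc (0 : ℝ) T) :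
    AEStronglyMeasurable (N t) volume := by
  obtain ⟨N', h1, h2⟩ := h
  exact ⟨N' t, h1.comp_measurable measurable_prodMk_left, h2 t ht⟩

lemma conv_sm {f g : ℝ → ℝ → ℂ} (hf : StronglyMeasurable (Function.uncurry f))
    (hg : StronglyMeasurable (Function.uncurry g)) :
    StronglyMeasurable (Function.uncurry fun t => conv (f t) (g t)) := by
  have : StronglyMeasurable
      (Function.uncurry fun (p : ℝ × ℝ) (η : ℝ) => f p.1 η * g p.1 (p.2 - η)) := by
    apply StronglyMeasurable.mul
    · exact hf.comp_measurable
        (g := fun q : (ℝ × ℝ) × ℝ => (q.1.1, q.2)) (by fun_prop)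
    · exact hg.comp_measurable
        (g := fun q : (ℝ × ℝ) × ℝ => (q.1.1, q.1.2 - q.2)) (by fun_prop)
  exact this.integral_prod_right

lemma convList_sm (n : ℕ) (w : Fin (n + 1) → ℝ → ℝ → ℂ)
    (hw : ∀ i, StronglyMeasurable (Function.uncurry (w i))) :
    StronglyMeasurable (Function.uncurry fun t => convList (List.ofFn fun i => w i t)) := by
  induction n with
  | zero => simpa [convList] using hw 0
  | succ n ih =>
    simp only [convList_ofFn_succ]
    exact conv_sm (hw 0) (ih _ fun i => hw _)

lemma convList_congr (n : ℕ) (f g : Fin (n + 1) → ℝ → ℂ) (h : ∀ i, f i =ᵐ[volume] g i) :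
    convList (List.ofFn f) =ᵐ[volume] convList (List.ofFn g) := by
  induction n with
  | zero => simpa [convList] using h 0
  | succ n ih =>
    simp only [convList_ofFn_succ]
    rw [conv_congr (h 0) (ih _ _ fun i => h i.succ)]

lemma convList_HM (n : ℕ) (T : ℝ) (w : Fin (n + 2) → ℝ → ℝ → ℂ) (hw : ∀ i, HV T (w i)) :
    HM T (fun t => convList (List.ofFn fun i => w i t)) := by
  choose w' h1 h2 using hw
  refine ⟨fun t => convList (List.ofFn fun i => w' i t), convList_sm _ w' h1, fun t ht => ?_⟩
  simp only [convList_ofFn_succ]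
  exact conv_congr (h2 0 t ht) (convList_congr _ _ _ fun i => h2 i.succ t ht)

lemma HM.sub {T : ℝ} {N N₁ : ℝ → ℝ → ℂ} (h : HM T N) (h' : HM T N₁) :
    HM T (fun t ξ => N t ξ - N₁ t ξ) := by
  obtain ⟨N', h1, h2⟩ := h
  obtain ⟨N₁', h1', h2'⟩ := h'
  exact ⟨fun t ξ => N' t ξ - N₁' t ξ, h1.sub h1', fun t ht => by
    funext ξ
    simp only [h2 t ht, h2' t ht]⟩

lemma HM.sum {ι : Type*} {T : ℝ} (s : Finset ι) {N : ι → ℝ → ℝ → ℂ} (h : ∀ i, HM T (N i)) :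
    HM T (fun t ξ => ∑ i ∈ s, N i t ξ) := by
  choose N' h1 h2 using h
  refine ⟨fun t ξ => ∑ i ∈ s, N' i t ξ, ?_, fun t ht => ?_⟩
  · exact Finset.stronglyMeasurable_fun_sum s (fun i _ => h1 i)
  · funext ξ
    exact Finset.sum_congr rfl fun i _ => by rw [h2 i t ht]

/-- A curve continuous in `L¹` has a jointly measurable version. -/
lemma HV_of_continuous {T : ℝ} (hT : 0 ≤ T) {v : ℝ → ℝ → ℂ}
    (hi : ∀ t ∈ Set.Icc (0 : ℝ) T, Integrable (v t)) (hc : ContinuousL1On T v) : HV T v := by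
  set π : ℝ → ℝ := fun t => (Set.projIcc 0 T hT t : ℝ) with hπ
  have hπm : ∀ t, π t ∈ Set.Icc (0 : ℝ) T := fun t => (Set.projIcc 0 T hT t).2
  have hπc : Continuous π := continuous_subtype_val.comp continuous_projIcc
  set G : ℝ → ℝ → ℂ := fun t x => ∫ η in (0:ℝ)..x, v (π t) η with hG
  have hcont : Continuous (Function.uncurry G) := by
    rw [continuous_iff_continuousAt]
    rintro ⟨t₀, x₀⟩
    have hA : Tendsto (fun p : ℝ × ℝ => eLpNorm (fun ξ => v (π p.1) ξ - v (π t₀) ξ) 1 volume)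
        (nhds (t₀, x₀)) (nhds 0) := by
      refine (hc (π t₀) (hπm t₀)).comp ?_
      refine tendsto_nhdsWithin_iff.2 ⟨?_, Eventually.of_forall fun p => hπm p.1⟩
      exact (hπc.comp continuous_fst).tendsto (t₀, x₀)
    have hA' : Tendsto (fun p : ℝ × ℝ => G p.1 p.2 - G t₀ p.2) (nhds (t₀, x₀)) (nhds 0) := by
      rw [tendsto_zero_iff_enorm_tendsto_zero]
      refine tendsto_of_tendsto_of_tendsto_of_le_of_le tendsto_const_nhds hA
        (fun _ => zero_le) (fun p => ?_)
      simp only [hG]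
      rw [← intervalIntegral.integral_sub (hi _ (hπm _)).intervalIntegrable
        (hi _ (hπm _)).intervalIntegrable, eLpNorm_one_eq_lintegral_enorm,
        ← enorm_norm, intervalIntegral.norm_intervalIntegral_eq, enorm_norm]
      exact (enorm_integral_le_lintegral_enorm _).trans (setLIntegral_le_lintegral _ _)
    have hB : Tendsto (fun p : ℝ × ℝ => G t₀ p.2) (nhds (t₀, x₀)) (nhds (G t₀ x₀)) := by
      have : Continuous (G t₀) :=
        intervalIntegral.continuous_primitive
          (fun a b => (hi _ (hπm t₀)).intervalIntegrable) 0
      exact (this.comp continuous_snd).tendsto (t₀, x₀)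
    have := hA'.add hB
    simpa [ContinuousAt, Function.uncurry_def] using this
  refine ⟨fun t x => deriv (G t) x, (stronglyMeasurable_deriv_with_param hcont), fun t ht => ?_⟩
  have hpt : π t = t := by simp [hπ, Set.projIcc_of_mem hT ht]
  filter_upwards [LocallyIntegrable.ae_hasDerivAt_integral (hi t ht).locallyIntegrable] with x hx
  have := (hx 0).deriv
  simp only [hG, hpt]
  exact this.symm

/-! ### The Duhamel operator -/

lemma lam_nonneg (ξ : ℝ) : 0 ≤ lam ξ := by
  unfold lam; positivity

lemma lam_le_one (ξ : ℝ) : lam ξ ≤ 1 := by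
  unfold lam
  rw [← Real.sqrt_eq_rpow]
  apply div_le_one_of_le₀ _ (Real.sqrt_nonneg _)
  apply Real.abs_le_sqrt
  linarith

lemma lam_meas : Measurable lam := by
  unfold lam
  fun_prop

/-- The Duhamel integral. -/
noncomputable def Duh (N : ℝ → ℝ → ℂ) (t ξ : ℝ) : ℂ :=
  ∫ t' in (0:ℝ)..t, ((Real.sin ((t - t') * lam ξ) * lam ξ : ℝ) : ℂ) * N t' ξ

lemma Ihat_eq (k : ℕ) (w : Fin k → ℝ → ℝ → ℂ) :
    Ihat k w = Duh (fun t => convList (List.ofFn fun i => w i t)) := rfl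

lemma ker_bound {T t t' ξ : ℝ} (ht : t ∈ Set.Icc (0 : ℝ) T) (ht' : t' ∈ Set.Icc (0 : ℝ) T) :
    ‖((Real.sin ((t - t') * lam ξ) * lam ξ : ℝ) : ℂ)‖ₑ ≤ ENNReal.ofReal T := by
  rw [← ofReal_norm]
  apply ENNReal.ofReal_le_ofReal
  rw [Complex.norm_real, Real.norm_eq_abs, abs_mul, abs_of_nonneg (lam_nonneg ξ)]
  have h0 := lam_nonneg ξ
  have h1 := lam_le_one ξ
  have h2 : |Real.sin ((t - t') * lam ξ)| ≤ |t - t'| * lam ξ := by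
    refine Real.abs_sin_le_abs.trans ?_
    rw [abs_mul, abs_of_nonneg h0]
  have h3 : |t - t'| ≤ T := by
    rw [abs_le]; constructor <;> linarith [ht.1, ht.2, ht'.1, ht'.2]
  have hT : 0 ≤ T := ht.1.trans ht.2
  calc _ ≤ (|t - t'| * lam ξ) * lam ξ := by gcongr
    _ ≤ (T * 1) * 1 := by gcongr
    _ = T := by ring

lemma Duh_congr {T : ℝ} {N N' : ℝ → ℝ → ℂ} (h : ∀ t ∈ Set.Icc (0 : ℝ) T, N t = N' t) {t : ℝ}
    (ht : t ∈ Set.Icc (0 : ℝ) T) : Duh N t = Duh N' t := by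
  funext ξ
  apply intervalIntegral.integral_congr
  intro t' ht'
  rw [Set.uIcc_of_le ht.1] at ht'
  simp only [h t' ⟨ht'.1, ht'.2.trans ht.2⟩]

lemma Duh_lintegral {T : ℝ} {N : ℝ → ℝ → ℂ} (hN : StronglyMeasurable (Function.uncurry N))
    {B : ℝ≥0∞} (hB : ∀ t ∈ Set.Icc (0 : ℝ) T, eLpNorm (N t) 1 volume ≤ B) {t : ℝ}
    (ht : t ∈ Set.Icc (0 : ℝ) T) :
    ∫⁻ ξ, ∫⁻ t' in Set.Ioc 0 t,
      ‖((Real.sin ((t - t') * lam ξ) * lam ξ : ℝ) : ℂ) * N t' ξ‖ₑ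
        ≤ ENNReal.ofReal (T ^ 2) * B := by
  have hlam := lam_meas
  have hK : StronglyMeasurable (Function.uncurry fun ξ t' : ℝ =>
      ((Real.sin ((t - t') * lam ξ) * lam ξ : ℝ) : ℂ) * N t' ξ) := by
    apply StronglyMeasurable.mul
    · apply Measurable.stronglyMeasurable
      fun_prop
    · exact hN.comp_measurable measurable_swap
  rw [lintegral_lintegral_swap hK.aestronglyMeasurable.enorm]
  calc _ ≤ ∫⁻ t' in Set.Ioc 0 t, ENNReal.ofReal T * B := by
        apply setLIntegral_mono measurable_const
        intro t' ht'
        have ht'' : t' ∈ Set.Icc (0 : ℝ) T := ⟨ht'.1.le, ht'.2.trans ht.2⟩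
        calc _ ≤ ∫⁻ ξ, ENNReal.ofReal T * ‖N t' ξ‖ₑ := by
              apply lintegral_mono
              intro ξ
              simp only [enorm_mul]
              gcongr
              exact ker_bound ht ht''
          _ = ENNReal.ofReal T * eLpNorm (N t') 1 volume := by
              rw [lintegral_const_mul' _ _ (by simp), eLpNorm_one_eq_lintegral_enorm]
          _ ≤ _ := by
              gcongr
              exact hB t' ht''
    _ = ENNReal.ofReal t * (ENNReal.ofReal T * B) := by
        rw [setLIntegral_const, Real.volume_Ioc, sub_zero, mul_comm]
    _ ≤ ENNReal.ofReal T * (ENNReal.ofReal T * B) := by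
        gcongr
        exact ht.2
    _ = _ := by
        rw [← mul_assoc, ← ENNReal.ofReal_mul (ht.1.trans ht.2), sq]

lemma Duh_norm {T : ℝ} {N : ℝ → ℝ → ℂ} (hN : HM T N)
    {B : ℝ≥0∞} (hB : ∀ t ∈ Set.Icc (0 : ℝ) T, eLpNorm (N t) 1 volume ≤ B) {t : ℝ}
    (ht : t ∈ Set.Icc (0 : ℝ) T) :
    eLpNorm (Duh N t) 1 volume ≤ ENNReal.ofReal (T ^ 2) * B := by
  obtain ⟨N', h1, h2⟩ := hN
  rw [Duh_congr h2 ht]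
  refine le_trans ?_ (Duh_lintegral h1 (fun s hs => by rw [← h2 s hs]; exact hB s hs) ht)
  rw [eLpNorm_one_eq_lintegral_enorm]
  apply lintegral_mono
  intro ξ
  simp only [Duh]
  rw [intervalIntegral.integral_of_le ht.1]
  exact enorm_integral_le_lintegral_enorm _

lemma Duh_ae {T : ℝ} {N : ℝ → ℝ → ℂ} (hN : HM T N)
    {B : ℝ≥0∞} (hBt : B ≠ ⊤) (hB : ∀ t ∈ Set.Icc (0 : ℝ) T, eLpNorm (N t) 1 volume ≤ B) {t : ℝ}
    (ht : t ∈ Set.Icc (0 : ℝ) T) :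
    ∀ᵐ ξ : ℝ, IntervalIntegrable
      (fun t' => ((Real.sin ((t - t') * lam ξ) * lam ξ : ℝ) : ℂ) * N t' ξ) volume 0 t := by
  obtain ⟨N', h1, h2⟩ := hN
  have hlam := lam_meas
  have hK : StronglyMeasurable (Function.uncurry fun ξ t' : ℝ =>
      ((Real.sin ((t - t') * lam ξ) * lam ξ : ℝ) : ℂ) * N' t' ξ) := by
    apply StronglyMeasurable.mul
    · apply Measurable.stronglyMeasurable
      fun_prop
    · exact h1.comp_measurable measurable_swap
  have h3 := Duh_lintegral h1 (fun s hs => by rw [← h2 s hs]; exact hB s hs) ht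
  have h4 := ae_lt_top' (hK.enorm.lintegral_prod_right
    (ν := volume.restrict (Set.Ioc 0 t))).aemeasurable
    (h3.trans_lt (ENNReal.mul_lt_top ENNReal.ofReal_lt_top hBt.lt_top)).ne
  filter_upwards [h4] with ξ hξ
  rw [intervalIntegrable_iff_integrableOn_Ioc_of_le ht.1]
  have h5 : IntegrableOn
      (fun t' => ((Real.sin ((t - t') * lam ξ) * lam ξ : ℝ) : ℂ) * N' t' ξ) (Set.Ioc 0 t) volume :=
    ⟨(hK.comp_measurable measurable_prodMk_left).aestronglyMeasurable, hξ⟩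
  refine h5.congr_fun ?_ measurableSet_Ioc
  intro t' ht'
  simp only [h2 t' ⟨ht'.1.le, ht'.2.trans ht.2⟩]

lemma Duh_HM {T : ℝ} {N : ℝ → ℝ → ℂ} (hN : HM T N) : HM T (Duh N) := by
  obtain ⟨N', h1, h2⟩ := hN
  have hlam := lam_meas
  refine ⟨fun t ξ => ∫ t', (Set.indicator {q : (ℝ × ℝ) × ℝ | 0 < q.2 ∧ q.2 ≤ q.1.1}
    (fun q => ((Real.sin ((q.1.1 - q.2) * lam q.1.2) * lam q.1.2 : ℝ) : ℂ) * N' q.2 q.1.2))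
      ((t, ξ), t'), ?_, fun t ht => ?_⟩
  · apply StronglyMeasurable.integral_prod_right (f := fun (p : ℝ × ℝ) (t' : ℝ) =>
      (Set.indicator {q : (ℝ × ℝ) × ℝ | 0 < q.2 ∧ q.2 ≤ q.1.1}
    (fun q => ((Real.sin ((q.1.1 - q.2) * lam q.1.2) * lam q.1.2 : ℝ) : ℂ) * N' q.2 q.1.2))
      (p, t'))
    apply StronglyMeasurable.indicator
    · apply StronglyMeasurable.mul
      · apply Measurable.stronglyMeasurable
        fun_prop
      · exact h1.comp_measurable (g := fun q : (ℝ × ℝ) × ℝ => (q.2, q.1.2)) (by fun_prop)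
    · exact (measurableSet_lt measurable_const measurable_snd).inter
        (measurableSet_le measurable_snd (measurable_fst.comp measurable_fst))
  · rw [Duh_congr h2 ht]
    funext ξ
    simp only [Duh]
    rw [intervalIntegral.integral_of_le ht.1, ← integral_indicator measurableSet_Ioc]
    apply integral_congr_ae
    refine Eventually.of_forall fun t' => ?_
    simp only [Set.indicator, Set.mem_Ioc, Set.mem_ofPred_eq]

/-! ### The linear evolution -/

lemma mker_bound {t ξ : ℝ} (ht : 0 ≤ t) (ht1 : t ≤ 1) : |mker t ξ| ≤ 1 := by
  unfold mker
  split_ifs with h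
  · rwa [abs_of_nonneg ht]
  · have h0 : 0 < lam ξ := by unfold lam; positivity
    rw [abs_div, abs_of_pos h0, div_le_one h0]
    refine Real.abs_sin_le_abs.trans ?_
    rw [abs_mul, abs_of_pos h0, abs_of_nonneg ht]
    nlinarith

lemma mker_meas : Measurable (Function.uncurry mker) := by
  have hlam := lam_meas
  unfold mker Function.uncurry
  apply Measurable.ite
  · exact measurable_snd (measurableSet_singleton 0)
  · fun_prop
  · fun_prop

lemma Shat_HV (T : ℝ) {v₀ v₁ : ℝ → ℂ} (h₀ : Integrable v₀) (h₁ : Integrable v₁) :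
    HV T (fun t => Shat t v₀ v₁) := by
  obtain ⟨w₀, hw₀, e₀⟩ := h₀.aestronglyMeasurable
  obtain ⟨w₁, hw₁, e₁⟩ := h₁.aestronglyMeasurable
  have hlam := lam_meas
  refine ⟨fun t => Shat t w₀ w₁, ?_, fun t _ => ?_⟩
  · unfold Shat Function.uncurry
    apply StronglyMeasurable.add
    · apply StronglyMeasurable.mul
      · apply Measurable.stronglyMeasurable
        fun_prop
      · exact hw₀.comp_measurable measurable_snd
    · apply StronglyMeasurable.mul
      · exact (Complex.measurable_ofReal.comp mker_meas).stronglyMeasurable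
      · exact hw₁.comp_measurable measurable_snd
  · filter_upwards [e₀, e₁] with ξ a b
    simp only [Shat, a, b]

lemma Shat_norm {t : ℝ} (ht : 0 ≤ t) (ht1 : t ≤ 1) {v₀ v₁ : ℝ → ℂ} (h₀ : Integrable v₀) :
    eLpNorm (Shat t v₀ v₁) 1 volume ≤ eLpNorm v₀ 1 volume + eLpNorm v₁ 1 volume := by
  simp only [eLpNorm_one_eq_lintegral_enorm]
  rw [← lintegral_add_left' h₀.aestronglyMeasurable.enorm]
  apply lintegral_mono
  intro ξ
  have aux : ∀ r : ℝ, |r| ≤ 1 → ∀ z : ℂ, ‖(r : ℂ) * z‖ₑ ≤ ‖z‖ₑ := by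
    intro r hr z
    rw [enorm_le_iff_norm_le, norm_mul, Complex.norm_real, Real.norm_eq_abs]
    exact mul_le_of_le_one_left (norm_nonneg _) hr
  exact (enorm_add_le _ _).trans (add_le_add (aux _ (Real.abs_cos_le_one _) _)
    (aux _ (mker_bound ht ht1) _))

/-! ### Combinatorics and sequences -/

/-- Tuples with entries less than `J`. -/
def boxF (k J : ℕ) : Finset (Fin k → ℕ) := Fintype.piFinset fun _ => Finset.range J

/-- Tuples with sum less than `J`. -/
def simF (k J : ℕ) : Finset (Fin k → ℕ) := (boxF k J).filter fun p => ∑ i, p i < J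

lemma sum_simF {E : Type*} [AddCommMonoid E] (k J : ℕ) (g : (Fin k → ℕ) → E) :
    ∑ j ∈ Finset.range J, ∑ p ∈ Finset.Nat.antidiagonalTuple k j, g p = ∑ p ∈ simF k J, g p := by
  rw [← Finset.sum_fiberwise_of_maps_to (s := simF k J) (t := Finset.range J)
    (g := fun p => ∑ i, p i) (fun p hp => Finset.mem_range.2 (Finset.mem_filter.1 hp).2)]
  refine Finset.sum_congr rfl fun j hj => Finset.sum_congr ?_ fun _ _ => rfl
  ext p
  simp only [Finset.Nat.mem_antidiagonalTuple, simF, boxF, Finset.mem_filter,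
    Fintype.mem_piFinset, Finset.mem_range] at hj ⊢
  constructor
  · intro h
    refine ⟨⟨fun i => ?_, by omega⟩, h⟩
    have := Finset.single_le_sum (f := p) (fun _ _ => Nat.zero_le _) (Finset.mem_univ i)
    omega
  · exact fun h => h.2

lemma sum_boxF {R : Type*} [CommSemiring R] (k J : ℕ) (a : ℕ → R) :
    ∑ p ∈ boxF k J, ∏ i, a (p i) = (∑ j ∈ Finset.range J, a j) ^ k := by
  have := Finset.prod_univ_sum (fun _ : Fin k => Finset.range J) (fun _ j => a j)
  rw [boxF, ← this]
  simp

lemma exists_le_boxF (k : ℕ) (s : Finset (Fin k → ℕ)) : ∃ J, s ⊆ boxF k J := by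
  refine ⟨(s.sup fun p => ∑ i, p i) + 1, fun p hp => ?_⟩
  simp only [boxF, Fintype.mem_piFinset, Finset.mem_range]
  intro i
  have h1 := Finset.single_le_sum (f := p) (fun _ _ => Nat.zero_le _) (Finset.mem_univ i)
  have h2 := Finset.le_sup (f := fun p : Fin k → ℕ => ∑ i, p i) hp
  omega

lemma mem_simF {k J : ℕ} {p : Fin k → ℕ} : p ∈ simF k J ↔ ∑ i, p i < J := by
  simp only [simF, boxF, Finset.mem_filter, Fintype.mem_piFinset, Finset.mem_range]
  refine ⟨fun h => h.2, fun h => ⟨fun i => ?_, h⟩⟩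
  have := Finset.single_le_sum (f := p) (fun _ _ => Nat.zero_le _) (Finset.mem_univ i)
  omega

lemma tail_tendsto (k : ℕ) (a : ℕ → ℝ≥0∞) (A : ℝ≥0∞) (hA : A ≠ ⊤)
    (h : ∀ J, ∑ j ∈ Finset.range J, a j ≤ A) :
    Tendsto (fun J => ∑ p ∈ boxF k J \ simF k J, ∏ i, a (p i)) atTop (nhds 0) := by
  have hfin : ∑' p : Fin k → ℕ, ∏ i, a (p i) ≠ ⊤ := by
    refine ne_top_of_le_ne_top (ENNReal.pow_ne_top hA (n := k)) ?_
    rw [ENNReal.tsum_eq_iSup_sum]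
    refine iSup_le fun s => ?_
    obtain ⟨J, hJ⟩ := exists_le_boxF k s
    calc _ ≤ ∑ p ∈ boxF k J, ∏ i, a (p i) := Finset.sum_le_sum_of_subset hJ
      _ = (∑ j ∈ Finset.range J, a j) ^ k := sum_boxF k J a
      _ ≤ A ^ k := by gcongr; exact h J
  have h1 := ENNReal.tendsto_tsum_compl_atTop_zero hfin
  have h2 : Tendsto (fun J => simF k J) atTop atTop := by
    apply tendsto_atTop_finset_of_monotone
    · intro J J' hJ p hp
      rw [mem_simF] at hp ⊢
      omega
    · intro p
      exact ⟨(∑ i, p i) + 1, mem_simF.2 (by omega)⟩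
  refine tendsto_of_tendsto_of_tendsto_of_le_of_le tendsto_const_nhds (h1.comp h2)
    (fun _ => zero_le) (fun J => ?_)
  simp only [Function.comp]
  rw [← Finset.sum_subtype_of_mem (p := fun x => x ∉ simF k J) (fun p : Fin k → ℕ => ∏ i, a (p i))
    (fun x hx => (Finset.mem_sdiff.1 hx).2)]
  exact ENNReal.sum_le_tsum _

lemma rec_tendsto (r e : ℕ → ℝ≥0∞) (R : ℝ≥0∞) (hR : R ≠ ⊤) (hr : ∀ J, r J ≤ R)
    (he : Tendsto e atTop (nhds 0)) (h : ∀ J, r (J + 1) ≤ 2⁻¹ * r J + e J) :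
    Tendsto r atTop (nhds 0) := by
  have hL : limsup r atTop ≤ R := limsup_le_of_le (by isBoundedDefault) (Eventually.of_forall hr)
  have h1 : limsup r atTop ≤ 2⁻¹ * limsup r atTop := by
    refine ENNReal.le_of_forall_pos_le_add fun ε hε _ => ?_
    have hf : Monotone (fun x : ℝ≥0∞ => 2⁻¹ * x + ε) := fun x y hxy => by
      simp only
      gcongr
    have hfc : Continuous (fun x : ℝ≥0∞ => 2⁻¹ * x + ε) :=
      (ENNReal.continuous_const_mul (by simp)).add continuous_const
    have hev : ∀ᶠ J in atTop, e J ≤ ε :=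
      (he.eventually_lt_const (by exact_mod_cast hε)).mono fun _ h => h.le
    calc limsup r atTop = limsup (fun J => r (J + 1)) atTop := (limsup_nat_add r 1).symm
      _ ≤ limsup ((fun x : ℝ≥0∞ => 2⁻¹ * x + ε) ∘ r) atTop := by
        refine limsup_le_limsup ?_
        filter_upwards [hev] with J hJ
        exact (h J).trans (by simp only [Function.comp]; gcongr)
      _ = 2⁻¹ * limsup r atTop + ε :=
        (hf.map_limsup_of_continuousAt r hfc.continuousAt).symm
  have h0 : limsup r atTop = 0 := by
    have hne : limsup r atTop ≠ ⊤ := ne_top_of_le_ne_top hR hL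
    lift limsup r atTop to NNReal using hne with x
    have h2 : ((2 : NNReal)⁻¹ : NNReal) = (2⁻¹ : ℝ≥0∞) := by simp
    rw [← h2] at h1
    norm_cast at h1 ⊢
    have h3 : (x : ℝ) ≤ 2⁻¹ * x := by exact_mod_cast h1
    have h4 : (0 : ℝ) ≤ x := x.2
    have : (x : ℝ) = 0 := by linarith
    exact_mod_cast this
  exact tendsto_of_le_liminf_of_limsup_le zero_le h0.le

/-! ### The multilinear estimate -/

lemma cmm_enorm (n : ℕ) (P : ContinuousMultilinearMap ℂ (fun _ : Fin n => LOne) LOne) {C : ℝ}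
    (hC : ‖P‖ ≤ C) (m : Fin n → LOne) : ‖P m‖ₑ ≤ ENNReal.ofReal C * ∏ i, ‖m i‖ₑ := by
  have h := P.le_of_opNorm_le hC m
  simp only [← ofReal_norm]
  rw [← ENNReal.ofReal_prod_of_nonneg (fun i _ => norm_nonneg _),
    ← ENNReal.ofReal_mul ((norm_nonneg P).trans hC)]
  exact ENNReal.ofReal_le_ofReal h

lemma multi_est (n : ℕ) (P : ContinuousMultilinearMap ℂ (fun _ : Fin (n + 2) => LOne) LOne) {C : ℝ}
    (hC : ‖P‖ ≤ C) (V : LOne) (x : ℕ → LOne) (a : ℕ → ℝ≥0∞) (hx : ∀ j, ‖x j‖ₑ ≤ a j)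
    (K : ℝ) (hK : 0 ≤ K) (hV : ‖V‖ₑ ≤ ENNReal.ofReal K) (J : ℕ)
    (hA : ∑ j ∈ Finset.range J, a j ≤ ENNReal.ofReal K) :
    ‖P (fun _ => V) - ∑ p ∈ simF (n + 2) J, P (fun i => x (p i))‖ₑ
      ≤ ENNReal.ofReal (C * (n + 2 : ℕ) * K ^ (n + 1)) * ‖V - ∑ j ∈ Finset.range J, x j‖ₑ
        + ENNReal.ofReal C * ∑ p ∈ boxF (n + 2) J \ simF (n + 2) J, ∏ i, a (p i) := by
  have hC0 : 0 ≤ C := (norm_nonneg P).trans hC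
  set S := ∑ j ∈ Finset.range J, x j with hS
  have hSn : ‖S‖ ≤ K := by
    have : ‖S‖ₑ ≤ ENNReal.ofReal K :=
      (enorm_sum_le _ _).trans ((Finset.sum_le_sum fun j _ => hx j).trans hA)
    rw [← ofReal_norm] at this
    exact (ENNReal.ofReal_le_ofReal_iff hK).1 this
  have hVn : ‖V‖ ≤ K := by
    rw [← ofReal_norm] at hV
    exact (ENNReal.ofReal_le_ofReal_iff hK).1 hV
  have hexp : P (fun _ => S) = ∑ p ∈ boxF (n + 2) J, P (fun i => x (p i)) := by
    rw [boxF]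
    exact P.map_sum_finset (fun _ j => x j) (fun _ => Finset.range J)
  have hsplit : P (fun _ => V) - ∑ p ∈ simF (n + 2) J, P (fun i => x (p i))
      = (P (fun _ => V) - P (fun _ => S))
        + ∑ p ∈ boxF (n + 2) J \ simF (n + 2) J, P (fun i => x (p i)) := by
    have hsub : simF (n + 2) J ⊆ boxF (n + 2) J := Finset.filter_subset _ _
    rw [hexp, ← Finset.sum_sdiff hsub]
    abel
  rw [hsplit]
  refine (enorm_add_le _ _).trans (add_le_add ?_ ?_)
  · have h1 := P.norm_image_sub_le (fun _ => V) (fun _ => S)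
    have h2 : ‖(fun _ : Fin (n + 2) => V) - (fun _ => S)‖ = ‖V - S‖ :=
      pi_norm_const (V - S)
    rw [h2, pi_norm_const, pi_norm_const, Fintype.card_fin] at h1
    rw [← ofReal_norm, ← ofReal_norm, ← ENNReal.ofReal_mul (by positivity)]
    apply ENNReal.ofReal_le_ofReal
    refine h1.trans ?_
    have h3 : max ‖V‖ ‖S‖ ≤ K := max_le hVn hSn
    have h4 : 0 ≤ max ‖V‖ ‖S‖ := (norm_nonneg V).trans (le_max_left _ _)
    have h5 : n + 2 - 1 = n + 1 := by omega
    rw [h5]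
    gcongr
  · refine (enorm_sum_le _ _).trans ?_
    rw [Finset.mul_sum]
    refine Finset.sum_le_sum fun p _ => ?_
    refine (cmm_enorm _ P hC _).trans ?_
    gcongr
    exact hx _

/-! ### Picard iterates -/

lemma convList_norm (n : ℕ) {C : ℝ} (hC : ‖convMul n‖ ≤ C) (f : Fin (n + 1) → ℝ → ℂ)
    (hf : ∀ i, Integrable (f i)) :
    eLpNorm (convList (List.ofFn f)) 1 volume
      ≤ ENNReal.ofReal C * ∏ i, eLpNorm (f i) 1 volume := by
  rw [← toL_enorm (convList_integrable n f hf), ← convMul_toL n f hf]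
  refine (cmm_enorm _ _ hC _).trans ?_
  simp only [toL_enorm (hf _), le_refl]

/-- The nonlinearity evaluated on Picard iterates. -/
noncomputable def Nxi (k : ℕ) (v₀ v₁ : ℝ → ℂ) (p : Fin k → ℕ) (t : ℝ) : ℝ → ℂ :=
  convList (List.ofFn fun i => Xi k v₀ v₁ (p i) t)

lemma Xi_succ (k : ℕ) (v₀ v₁ : ℝ → ℂ) (j : ℕ) (t ξ : ℝ) :
    Xi k v₀ v₁ (j + 1) t ξ
      = ∑ p ∈ Finset.Nat.antidiagonalTuple k j, Duh (Nxi k v₀ v₁ p) t ξ := by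
  rw [Xi]
  exact Finset.sum_attach (Finset.Nat.antidiagonalTuple k j)
    (fun p => Duh (Nxi k v₀ v₁ p) t ξ)

lemma tuple_le {k j : ℕ} {p : Fin k → ℕ} (hp : p ∈ Finset.Nat.antidiagonalTuple k j) (i : Fin k) :
    p i ≤ j := by
  have h := Finset.Nat.mem_antidiagonalTuple.mp hp
  have := Finset.single_le_sum (f := p) (fun _ _ => Nat.zero_le _) (Finset.mem_univ i)
  omega

lemma Xi_HV (n : ℕ) (T : ℝ) {v₀ v₁ : ℝ → ℂ} (h₀ : Integrable v₀) (h₁ : Integrable v₁) (j : ℕ) :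
    HV T (Xi (n + 2) v₀ v₁ j) := by
  induction j using Nat.strong_induction_on with
  | _ j ih =>
    cases j with
    | zero =>
      have : Xi (n + 2) v₀ v₁ 0 = fun t => Shat t v₀ v₁ := by rw [Xi]
      rw [this]
      exact Shat_HV T h₀ h₁
    | succ j =>
      have : Xi (n + 2) v₀ v₁ (j + 1) = fun t ξ =>
          ∑ p ∈ (Finset.Nat.antidiagonalTuple (n + 2) j).attach,
            Duh (Nxi (n + 2) v₀ v₁ p.1) t ξ := by
        rw [Xi]
        rfl
      rw [this]
      apply HM.hv
      apply HM.sum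
      intro p
      apply Duh_HM
      apply convList_HM
      intro i
      exact ih _ (Nat.lt_succ_of_le (tuple_le p.2 i))

lemma Nxi_HM (n : ℕ) (T : ℝ) {v₀ v₁ : ℝ → ℂ} (h₀ : Integrable v₀) (h₁ : Integrable v₁)
    (p : Fin (n + 2) → ℕ) : HM T (Nxi (n + 2) v₀ v₁ p) :=
  convList_HM n T _ fun _ => Xi_HV n T h₀ h₁ _

/-- Supremum in time of the norm of the Picard iterates. -/
noncomputable def aXi (k : ℕ) (v₀ v₁ : ℝ → ℂ) (T : ℝ) (j : ℕ) : ℝ≥0∞ :=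
  ⨆ t ∈ Set.Icc (0 : ℝ) T, eLpNorm (Xi k v₀ v₁ j t) 1 volume

lemma le_aXi (k : ℕ) (v₀ v₁ : ℝ → ℂ) (T : ℝ) (j : ℕ) {t : ℝ} (ht : t ∈ Set.Icc (0 : ℝ) T) :
    eLpNorm (Xi k v₀ v₁ j t) 1 volume ≤ aXi k v₀ v₁ T j :=
  le_iSup₂ (f := fun t (_ : t ∈ Set.Icc (0 : ℝ) T) => eLpNorm (Xi k v₀ v₁ j t) 1 volume) t ht

lemma Xi_integrable (n : ℕ) (T : ℝ) {v₀ v₁ : ℝ → ℂ} (h₀ : Integrable v₀) (h₁ : Integrable v₁)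
    (j : ℕ) (ha : aXi (n + 2) v₀ v₁ T j ≠ ⊤) {t : ℝ} (ht : t ∈ Set.Icc (0 : ℝ) T) :
    Integrable (Xi (n + 2) v₀ v₁ j t) := by
  rw [← memLp_one_iff_integrable]
  exact ⟨(Xi_HV n T h₀ h₁ j).aesm ht, (le_aXi _ _ _ _ _ ht).trans_lt ha.lt_top⟩

lemma Nxi_norm (n : ℕ) (T : ℝ) {C : ℝ} (hC : ‖convMul (n + 1)‖ ≤ C)
    {v₀ v₁ : ℝ → ℂ} (h₀ : Integrable v₀) (h₁ : Integrable v₁)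
    (p : Fin (n + 2) → ℕ) (ha : ∀ i, aXi (n + 2) v₀ v₁ T (p i) ≠ ⊤) {t : ℝ}
    (ht : t ∈ Set.Icc (0 : ℝ) T) :
    eLpNorm (Nxi (n + 2) v₀ v₁ p t) 1 volume
      ≤ ENNReal.ofReal C * ∏ i, aXi (n + 2) v₀ v₁ T (p i) := by
  refine (convList_norm (n + 1) hC _ fun i => Xi_integrable n T h₀ h₁ _ (ha i) ht).trans ?_
  gcongr
  exact le_aXi _ _ _ _ _ ht

lemma aXi_succ (n : ℕ) (T : ℝ) {C : ℝ} (hC : ‖convMul (n + 1)‖ ≤ C)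
    {v₀ v₁ : ℝ → ℂ} (h₀ : Integrable v₀) (h₁ : Integrable v₁) (j : ℕ)
    (ha : ∀ i ≤ j, aXi (n + 2) v₀ v₁ T i ≠ ⊤) :
    aXi (n + 2) v₀ v₁ T (j + 1) ≤ ∑ p ∈ Finset.Nat.antidiagonalTuple (n + 2) j,
      ENNReal.ofReal (T ^ 2) * (ENNReal.ofReal C * ∏ i, aXi (n + 2) v₀ v₁ T (p i)) := by
  refine iSup₂_le fun t ht => ?_
  have h1 : Xi (n + 2) v₀ v₁ (j + 1) t = ∑ p ∈ Finset.Nat.antidiagonalTuple (n + 2) j,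
      Duh (Nxi (n + 2) v₀ v₁ p) t := by
    funext ξ
    rw [Xi_succ, Finset.sum_apply]
  rw [h1]
  refine (eLpNorm_sum_le (fun p _ => (Duh_HM (Nxi_HM n T h₀ h₁ p)).hv.aesm ht) le_rfl).trans ?_
  refine Finset.sum_le_sum fun p hp => ?_
  exact Duh_norm (Nxi_HM n T h₀ h₁ p)
    (fun s hs => Nxi_norm n T hC h₀ h₁ p (fun i => ha _ (tuple_le hp i)) hs) ht

lemma sum_aXi_le (n : ℕ) {T M C : ℝ} (hT : 0 < T) (hT1 : T ≤ 1) (hM : 0 < M)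
    (hC : ‖convMul (n + 1)‖ ≤ C)
    (hsmall : T ^ 2 * C * (2 * M) ^ (n + 2) ≤ M)
    {v₀ v₁ : ℝ → ℂ} (h₀ : Integrable v₀) (h₁ : Integrable v₁)
    (hv : eLpNorm v₀ 1 volume + eLpNorm v₁ 1 volume ≤ ENNReal.ofReal M) (J : ℕ) :
    ∑ j ∈ Finset.range J, aXi (n + 2) v₀ v₁ T j ≤ ENNReal.ofReal (2 * M) := by
  have hC0 : 0 ≤ C := (norm_nonneg _).trans hC
  induction J with
  | zero => simp
  | succ J ih =>
    have hfin : ∀ i < J, aXi (n + 2) v₀ v₁ T i ≠ ⊤ := fun i hi =>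
      ne_top_of_le_ne_top ENNReal.ofReal_ne_top
        ((Finset.single_le_sum (f := aXi (n + 2) v₀ v₁ T) (fun _ _ => zero_le)
          (Finset.mem_range.2 hi)).trans ih)
    have hz : aXi (n + 2) v₀ v₁ T 0 ≤ ENNReal.ofReal M := by
      refine iSup₂_le fun t ht => ?_
      rw [Xi]
      exact (Shat_norm ht.1 (ht.2.trans hT1) h₀).trans hv
    rw [Finset.sum_range_succ']
    calc _ ≤ ∑ j ∈ Finset.range J, ∑ p ∈ Finset.Nat.antidiagonalTuple (n + 2) j,
          ENNReal.ofReal (T ^ 2) * (ENNReal.ofReal C * ∏ i, aXi (n + 2) v₀ v₁ T (p i))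
            + ENNReal.ofReal M := by
          refine add_le_add (Finset.sum_le_sum fun j hj => ?_) hz
          exact aXi_succ n T hC h₀ h₁ j fun i hi =>
            hfin i (lt_of_le_of_lt hi (Finset.mem_range.1 hj))
      _ = ENNReal.ofReal (T ^ 2) * (ENNReal.ofReal C *
            ∑ p ∈ simF (n + 2) J, ∏ i, aXi (n + 2) v₀ v₁ T (p i)) + ENNReal.ofReal M := by
          rw [sum_simF, Finset.mul_sum, Finset.mul_sum]
      _ ≤ ENNReal.ofReal (T ^ 2) * (ENNReal.ofReal C *
            (ENNReal.ofReal (2 * M)) ^ (n + 2)) + ENNReal.ofReal M := by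
          gcongr
          calc _ ≤ ∑ p ∈ boxF (n + 2) J, ∏ i, aXi (n + 2) v₀ v₁ T (p i) :=
                Finset.sum_le_sum_of_subset (Finset.filter_subset _ _)
            _ = _ := sum_boxF _ _ _
            _ ≤ _ := by gcongr
      _ ≤ ENNReal.ofReal (2 * M) := by
          rw [← ENNReal.ofReal_pow (by positivity), ← ENNReal.ofReal_mul hC0,
            ← ENNReal.ofReal_mul (by positivity), ← ENNReal.ofReal_add (by positivity) hM.le]
          apply ENNReal.ofReal_le_ofReal
          linarith

/-- The one-step contraction estimate for the remainder. -/
lemma remainder_step (n : ℕ) {T M C : ℝ} (hT : 0 < T) (hT1 : T ≤ 1) (hM : 0 < M)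
    (hC : ‖convMul (n + 1)‖ ≤ C)
    (hsmall : T ^ 2 * C * (2 * M) ^ (n + 2) ≤ M)
    (hsmall2 : T ^ 2 * (C * (n + 2 : ℕ) * (2 * M) ^ (n + 1)) ≤ 2⁻¹)
    {v₀ v₁ : ℝ → ℂ} (h₀ : Integrable v₀) (h₁ : Integrable v₁)
    (hv : eLpNorm v₀ 1 volume + eLpNorm v₁ 1 volume ≤ ENNReal.ofReal M)
    {v : ℝ → ℝ → ℂ} (hsol : IsGIBqSol (n + 2) T v₀ v₁ v)
    (hvb : ∀ t ∈ Set.Icc (0 : ℝ) T, eLpNorm (v t) 1 volume ≤ ENNReal.ofReal (2 * M))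
    (J : ℕ) (r : ℝ≥0∞)
    (hr : ∀ t ∈ Set.Icc (0 : ℝ) T,
      eLpNorm (fun ξ => v t ξ - ∑ j ∈ Finset.range J, Xi (n + 2) v₀ v₁ j t ξ) 1 volume ≤ r)
    {t : ℝ} (ht : t ∈ Set.Icc (0 : ℝ) T) :
    eLpNorm (fun ξ => v t ξ - ∑ j ∈ Finset.range (J + 1), Xi (n + 2) v₀ v₁ j t ξ) 1 volume
      ≤ 2⁻¹ * r + ENNReal.ofReal (T ^ 2) * (ENNReal.ofReal C *
        ∑ p ∈ boxF (n + 2) J \ simF (n + 2) J, ∏ i, aXi (n + 2) v₀ v₁ T (p i)) := by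
  obtain ⟨hvi, hvc, hveq⟩ := hsol
  have hC0 : 0 ≤ C := (norm_nonneg _).trans hC
  have hA := sum_aXi_le n hT hT1 hM hC hsmall h₀ h₁ hv
  have hfin : ∀ i, aXi (n + 2) v₀ v₁ T i ≠ ⊤ := fun i =>
    ne_top_of_le_ne_top ENNReal.ofReal_ne_top
      ((Finset.single_le_sum (f := aXi (n + 2) v₀ v₁ T) (fun _ _ => zero_le)
        (Finset.mem_range.2 (Nat.lt_succ_self i))).trans (hA (i + 1)))
  have hXi : ∀ j, ∀ s ∈ Set.Icc (0 : ℝ) T, Integrable (Xi (n + 2) v₀ v₁ j s) := fun j s hs =>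
    Xi_integrable n T h₀ h₁ j (hfin j) hs
  set Nv : ℝ → ℝ → ℂ := fun t => convList (List.ofFn fun _ : Fin (n + 2) => v t) with hNv
  have hNvHM : HM T Nv := convList_HM n T _ fun _ => HV_of_continuous hT.le hvi hvc
  set R : ℝ → ℝ → ℂ := fun s ξ => Nv s ξ - ∑ p ∈ simF (n + 2) J, Nxi (n + 2) v₀ v₁ p s ξ with hR
  have hRHM : HM T R := hNvHM.sub (HM.sum _ fun p => Nxi_HM n T h₀ h₁ p)
  -- norm of the remainder nonlinearity
  have hRn : ∀ s ∈ Set.Icc (0 : ℝ) T, eLpNorm (R s) 1 volume ≤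
      ENNReal.ofReal (C * (n + 2 : ℕ) * (2 * M) ^ (n + 1)) * r + ENNReal.ofReal C *
        ∑ p ∈ boxF (n + 2) J \ simF (n + 2) J, ∏ i, aXi (n + 2) v₀ v₁ T (p i) := by
    intro s hs
    have e1 := convMul_coe (n + 1) (fun _ => v s) (fun _ => hvi s hs)
    have e2 : ∀ p : Fin (n + 2) → ℕ,
        (convMul (n + 1) (fun i => toL (Xi (n + 2) v₀ v₁ (p i) s)) : ℝ → ℂ)
          =ᵐ[volume] Nxi (n + 2) v₀ v₁ p s := fun p =>
      convMul_coe (n + 1) _ (fun i => hXi (p i) s hs)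
    have e3 := multi_est n (convMul (n + 1)) hC (toL (v s)) (fun j => toL (Xi (n + 2) v₀ v₁ j s))
      (aXi (n + 2) v₀ v₁ T) (fun j => by rw [toL_enorm (hXi j s hs)]; exact le_aXi _ _ _ _ _ hs)
      (2 * M) (by positivity) (by rw [toL_enorm (hvi s hs)]; exact hvb s hs) J (hA J)
    have e4 : eLpNorm (R s) 1 volume = ‖convMul (n + 1) (fun _ => toL (v s)) -
        ∑ p ∈ simF (n + 2) J, convMul (n + 1) (fun i => toL (Xi (n + 2) v₀ v₁ (p i) s))‖ₑ := by
      rw [Lp.enorm_def]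
      apply eLpNorm_congr_ae
      filter_upwards [e1, Lp.coeFn_sub (convMul (n + 1) (fun _ => toL (v s)))
        (∑ p ∈ simF (n + 2) J, convMul (n + 1) (fun i => toL (Xi (n + 2) v₀ v₁ (p i) s))),
        Lp.coeFn_finsetSum (simF (n + 2) J)
          (fun p => convMul (n + 1) (fun i => toL (Xi (n + 2) v₀ v₁ (p i) s))),
        ae_all_iff.2 e2] with ξ a1 a2 a3 a4
      rw [a2, Pi.sub_apply, a1, a3, Finset.sum_apply]
      simp only [hR, hNv, a4]
    have e5 : ‖toL (v s) - ∑ j ∈ Finset.range J, toL (Xi (n + 2) v₀ v₁ j s)‖ₑ ≤ r := by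
      refine le_trans (le_of_eq ?_) (hr s hs)
      rw [Lp.enorm_def]
      apply eLpNorm_congr_ae
      filter_upwards [toL_coe (hvi s hs), Lp.coeFn_sub (toL (v s))
        (∑ j ∈ Finset.range J, toL (Xi (n + 2) v₀ v₁ j s)),
        Lp.coeFn_finsetSum (Finset.range J) (fun j => toL (Xi (n + 2) v₀ v₁ j s)),
        ae_all_iff.2 fun j => toL_coe (hXi j s hs)] with ξ a1 a2 a3 a4
      rw [a2, Pi.sub_apply, a1, a3, Finset.sum_apply]
      simp only [a4]
    rw [e4]
    refine e3.trans ?_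
    gcongr
  -- the remainder is the Duhamel integral of `R`
  have hNvn : ∀ s ∈ Set.Icc (0 : ℝ) T, eLpNorm (Nv s) 1 volume ≤
      ENNReal.ofReal C * ∏ _i : Fin (n + 2), ENNReal.ofReal (2 * M) := by
    intro s hs
    refine (convList_norm (n + 1) hC _ fun _ => hvi s hs).trans ?_
    gcongr
    exact hvb s hs
  have i1 := Duh_ae hNvHM (ENNReal.mul_ne_top ENNReal.ofReal_ne_top
    (ENNReal.prod_ne_top fun _ _ => ENNReal.ofReal_ne_top)) hNvn ht
  have i2 : ∀ p : Fin (n + 2) → ℕ, ∀ᵐ ξ : ℝ, IntervalIntegrable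
      (fun t' => ((Real.sin ((t - t') * lam ξ) * lam ξ : ℝ) : ℂ) * Nxi (n + 2) v₀ v₁ p t' ξ)
        volume 0 t := fun p =>
    Duh_ae (Nxi_HM n T h₀ h₁ p) (ENNReal.mul_ne_top ENNReal.ofReal_ne_top
      (ENNReal.prod_ne_top fun _ _ => hfin _))
      (fun s hs => Nxi_norm n T hC h₀ h₁ p (fun i => hfin _) hs) ht
  have hrem : (fun ξ => v t ξ - ∑ j ∈ Finset.range (J + 1), Xi (n + 2) v₀ v₁ j t ξ)
      =ᵐ[volume] Duh R t := by
    filter_upwards [hveq t ht, i1, ae_all_iff.2 i2] with ξ b1 b2 b3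
    rw [b1, Finset.sum_range_succ']
    have hz : Xi (n + 2) v₀ v₁ 0 t ξ = Shat t v₀ v₁ ξ := by rw [Xi]
    have hD : Duh R t ξ = Duh Nv t ξ - ∑ p ∈ simF (n + 2) J, Duh (Nxi (n + 2) v₀ v₁ p) t ξ := by
      simp only [Duh]
      rw [← intervalIntegral.integral_finsetSum (fun p _ => b3 p),
        ← intervalIntegral.integral_sub b2 (by
          have := IntervalIntegrable.sum (simF (n + 2) J) (fun p _ => b3 p)
          simpa [Finset.sum_fn] using this)]
      apply intervalIntegral.integral_congr
      intro t' _
      simp only [hR, mul_sub, Finset.mul_sum]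
    rw [hz, hD, ← sum_simF]
    simp only [Xi_succ, Ihat_eq, hNv]
    ring
  rw [eLpNorm_congr_ae hrem]
  refine (Duh_norm hRHM hRn ht).trans ?_
  rw [mul_add, ← mul_assoc, ← ENNReal.ofReal_mul (by positivity)]
  gcongr
  refine (ENNReal.ofReal_le_ofReal hsmall2).trans ?_
  rw [ENNReal.ofReal_inv_of_pos (by norm_num)]
  simp

/-- Power series expansion of the `FL¹` solution of gIBq: the solution is given by the
absolutely convergent series of Picard iterates. -/
theorem power_series_expansion_FL1 (k : ℕ) (hk : 2 ≤ k) :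
    ∃ c : ℝ, 0 < c ∧
      ∀ M : ℝ, 0 < M →
        ∀ T : ℝ, 0 < T → T ≤ 1 → T ^ 2 * M ^ (k - 1) ≤ c →
          ∀ v₀ v₁ : ℝ → ℂ, Integrable v₀ → Integrable v₁ →
            eLpNorm v₀ 1 volume + eLpNorm v₁ 1 volume ≤ ENNReal.ofReal M →
            ∀ v : ℝ → ℝ → ℂ, IsGIBqSol k T v₀ v₁ v →
              (∀ t ∈ Set.Icc (0 : ℝ) T, eLpNorm (v t) 1 volume ≤ ENNReal.ofReal (2 * M)) →
              (∑' j : ℕ, ⨆ t ∈ Set.Icc (0 : ℝ) T, eLpNorm (Xi k v₀ v₁ j t) 1 volume) < ⊤ ∧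
              ∀ t ∈ Set.Icc (0 : ℝ) T,
                Tendsto
                  (fun J : ℕ =>
                    eLpNorm (fun ξ => v t ξ - ∑ j ∈ Finset.range J, Xi k v₀ v₁ j t ξ) 1 volume)
                  atTop (nhds 0) := by
  obtain ⟨n, rfl⟩ : ∃ n, k = n + 2 := ⟨k - 2, by omega⟩
  set C : ℝ := ‖convMul (n + 1)‖ + 1 with hCdef
  have hC : ‖convMul (n + 1)‖ ≤ C := by linarith
  have hCpos : 0 < C := by positivity
  refine ⟨1 / (C * ((n + 2 : ℕ) : ℝ) * 2 ^ (n + 2)), by positivity, ?_⟩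
  intro M hM T hT hT1 hTM v₀ v₁ h₀ h₁ hv v hsol hvb
  have hk1 : n + 2 - 1 = n + 1 := by omega
  rw [hk1, le_div_iff₀ (by positivity)] at hTM
  have hsmall2 : T ^ 2 * (C * (n + 2 : ℕ) * (2 * M) ^ (n + 1)) ≤ 2⁻¹ := by
    have : T ^ 2 * (C * (n + 2 : ℕ) * (2 * M) ^ (n + 1))
        = 2⁻¹ * (T ^ 2 * M ^ (n + 1) * (C * ((n + 2 : ℕ) : ℝ) * 2 ^ (n + 2))) := by
      rw [mul_pow]; ring
    rw [this]
    linarith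
  have hsmall : T ^ 2 * C * (2 * M) ^ (n + 2) ≤ M := by
    have hn : (1 : ℝ) ≤ ((n + 2 : ℕ) : ℝ) := by exact_mod_cast (by omega : 1 ≤ n + 2)
    calc T ^ 2 * C * (2 * M) ^ (n + 2) = (T ^ 2 * M ^ (n + 1) * (C * 1 * 2 ^ (n + 2))) * M := by
          rw [mul_pow]; ring
      _ ≤ (T ^ 2 * M ^ (n + 1) * (C * ((n + 2 : ℕ) : ℝ) * 2 ^ (n + 2))) * M := by gcongr
      _ ≤ 1 * M := by gcongr
      _ = M := one_mul M
  have hA := sum_aXi_le n hT hT1 hM hC hsmall h₀ h₁ hv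
  have htsum : ∑' j, aXi (n + 2) v₀ v₁ T j ≤ ENNReal.ofReal (2 * M) :=
    ENNReal.tsum_le_of_sum_range_le hA
  refine ⟨htsum.trans_lt ENNReal.ofReal_lt_top, ?_⟩
  set r : ℕ → ℝ≥0∞ := fun J => ⨆ t ∈ Set.Icc (0 : ℝ) T,
    eLpNorm (fun ξ => v t ξ - ∑ j ∈ Finset.range J, Xi (n + 2) v₀ v₁ j t ξ) 1 volume with hrdef
  have hle : ∀ J, ∀ t ∈ Set.Icc (0 : ℝ) T,
      eLpNorm (fun ξ => v t ξ - ∑ j ∈ Finset.range J, Xi (n + 2) v₀ v₁ j t ξ) 1 volume ≤ r J :=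
    fun J t ht => le_iSup₂ (f := fun t (_ : t ∈ Set.Icc (0 : ℝ) T) =>
      eLpNorm (fun ξ => v t ξ - ∑ j ∈ Finset.range J, Xi (n + 2) v₀ v₁ j t ξ) 1 volume) t ht
  have hr0 : Tendsto r atTop (nhds 0) := by
    apply rec_tendsto r (fun J => ENNReal.ofReal (T ^ 2) * (ENNReal.ofReal C *
        ∑ p ∈ boxF (n + 2) J \ simF (n + 2) J, ∏ i, aXi (n + 2) v₀ v₁ T (p i)))
      (ENNReal.ofReal (2 * M) + ENNReal.ofReal (2 * M))
      (ENNReal.add_ne_top.2 ⟨ENNReal.ofReal_ne_top, ENNReal.ofReal_ne_top⟩)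
    · intro J
      refine iSup₂_le fun t ht => ?_
      have hs : ∀ j ∈ Finset.range J, AEStronglyMeasurable (Xi (n + 2) v₀ v₁ j t) volume :=
        fun j _ => (Xi_HV n T h₀ h₁ j).aesm ht
      have e : (fun ξ => v t ξ - ∑ j ∈ Finset.range J, Xi (n + 2) v₀ v₁ j t ξ)
          = v t - ∑ j ∈ Finset.range J, Xi (n + 2) v₀ v₁ j t := by
        funext ξ
        simp
      rw [e]
      refine (eLpNorm_sub_le (hsol.1 t ht).aestronglyMeasurable
        (Finset.aestronglyMeasurable_sum _ hs) le_rfl).trans (add_le_add (hvb t ht) ?_)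
      refine (eLpNorm_sum_le hs le_rfl).trans ((Finset.sum_le_sum fun j _ => ?_).trans (hA J))
      exact le_aXi _ _ _ _ _ ht
    · have h1 := tail_tendsto (n + 2) _ _ ENNReal.ofReal_ne_top hA
      have h2 := ENNReal.Tendsto.const_mul (a := ENNReal.ofReal C) h1
        (Or.inr ENNReal.ofReal_ne_top)
      have h3 := ENNReal.Tendsto.const_mul (a := ENNReal.ofReal (T ^ 2)) h2
        (Or.inr ENNReal.ofReal_ne_top)
      simpa using h3
    · intro J
      exact iSup₂_le fun t ht =>
        remainder_step n hT hT1 hM hC hsmall hsmall2 h₀ h₁ hv hsol hvb J (r J) (hle J) ht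
  intro t ht
  exact tendsto_of_tendsto_of_tendsto_of_le_of_le tendsto_const_nhds hr0
    (fun _ => zero_le) (fun J => hle J t ht)
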